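/- Let G be a finite simple graph and let e = v_i v_j be an edge of G with v_j a non-pendent vertex (d_j ≥ 2). Let d_max^(i) denote the maximum degree among the neighbors of v_i other than v_j (when d_i ≥ 2), and d_max^(j) the maximum degree among the neighbors of v_j other than v_i. If either (i) d_i > d_k for every neighbor v_k of v_i other than v_j and d_j > d_l for every neighbor v_l of v_j other than v_i (when v_i is pendent, the condition on v_i is considered vacuously satisfied), or (ii) T_i + (d_max^(j) − d_j + 1)/(2√(d_max^(j))·√(d_j)) ≤ (d_i + d_j)/√(d_i d_j), where T_i = (d_max^(i) − d_i + 1)/(2√(d_max^(i))·√(d_i)) if d_i ≥ 2 and T_i = 0 if v_i is a pendent vertex, then AG(G) > AG(G − e), where G − e is the graph obtained from G by deleting the edge e. -/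

import Mathlib

open SimpleGraph

/-- The degree of a vertex, as a natural number (classical, to avoid decidability assumptions). -/
noncomputable def ndeg {V : Type*} [Fintype V] (G : SimpleGraph V) (v : V) : ℕ :=
  letI := Classical.decRel G.Adj
  G.degree v

/-- The degree of a vertex, as a real number. -/
noncomputable def deg {V : Type*} [Fintype V] (G : SimpleGraph V) (v : V) : ℝ :=
  (ndeg G v : ℝ)

/-- For a symmetric function `f`, `edgeSum G f = Σ_{uv ∈ E(G)} f (d_u) (d_v)`:
each unordered edge is counted twice in the double sum, hence the factor `1/2`. -/
noncomputable def edgeSum {V : Type*} [Fintype V] (G : SimpleGraph V) (f : ℝ → ℝ → ℝ) : ℝ :=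
  letI := Classical.decRel G.Adj
  (1 / 2) * ∑ u : V, ∑ w : V, if G.Adj u w then f (deg G u) (deg G w) else 0

/-- The arithmetic-geometric index `AG(G) = Σ_{uv ∈ E(G)} (1/2)(√(d_u/d_v) + √(d_v/d_u))`. -/
noncomputable def AG {V : Type*} [Fintype V] (G : SimpleGraph V) : ℝ :=
  edgeSum G (fun x y => (Real.sqrt (x / y) + Real.sqrt (y / x)) / 2)

/-- The first geometric-arithmetic index `GA(G) = Σ_{uv ∈ E(G)} 2√(d_u d_v)/(d_u + d_v)`. -/
noncomputable def GA {V : Type*} [Fintype V] (G : SimpleGraph V) : ℝ :=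
  edgeSum G (fun x y => 2 * Real.sqrt (x * y) / (x + y))

/-- The forgotten index `F(G) = Σ_{uv ∈ E(G)} (d_u² + d_v²)`. -/
noncomputable def forgottenIndex {V : Type*} [Fintype V] (G : SimpleGraph V) : ℝ :=
  edgeSum G (fun x y => x ^ 2 + y ^ 2)

/-- The first Zagreb index `M₁(G) = Σ_{uv ∈ E(G)} (d_u + d_v)`. -/
noncomputable def M1 {V : Type*} [Fintype V] (G : SimpleGraph V) : ℝ :=
  edgeSum G (fun x y => x + y)

/-- The second Zagreb index `M₂(G) = Σ_{uv ∈ E(G)} d_u d_v`. -/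
noncomputable def M2 {V : Type*} [Fintype V] (G : SimpleGraph V) : ℝ :=
  edgeSum G (fun x y => x * y)

/-- The symmetric division deg index `SDD(G) = Σ_{uv ∈ E(G)} (d_u/d_v + d_v/d_u)`. -/
noncomputable def SDD {V : Type*} [Fintype V] (G : SimpleGraph V) : ℝ :=
  edgeSum G (fun x y => x / y + y / x)

/-- The atom-bond connectivity index `ABC(G) = Σ_{uv ∈ E(G)} √((d_u + d_v − 2)/(d_u d_v))`. -/
noncomputable def ABC {V : Type*} [Fintype V] (G : SimpleGraph V) : ℝ :=
  edgeSum G (fun x y => Real.sqrt ((x + y - 2) / (x * y)))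

/-- `G` is `(s,r)`-semiregular: its vertex set is the disjoint union of two nonempty sets,
all vertices of the first having degree `s` and all vertices of the second degree `r`. -/
def IsSemiregular {V : Type*} [Fintype V] (G : SimpleGraph V) (s r : ℕ) : Prop :=
  ∃ V₁ V₂ : Set V, V₁.Nonempty ∧ V₂.Nonempty ∧ Disjoint V₁ V₂ ∧ V₁ ∪ V₂ = Set.univ ∧
    (∀ v ∈ V₁, ndeg G v = s) ∧ (∀ v ∈ V₂, ndeg G v = r)

/-- The contribution to the arithmetic-geometric index of an edge with end degrees `x`, `y`. -/
noncomputable def agTerm (x y : ℝ) : ℝ := (√(x / y) + √(y / x)) / 2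

/-- The summand of the double sum defining `AG`. -/
noncomputable def agEntry {V : Type*} [Fintype V] (G : SimpleGraph V) (u w : V) : ℝ :=
  letI := Classical.decRel G.Adj
  if G.Adj u w then agTerm (deg G u) (deg G w) else 0

/-- The change of the summand of `AG` when the edge `ab` is deleted. -/
noncomputable def agDiff {V : Type*} [Fintype V] (G : SimpleGraph V) (a b u w : V) : ℝ :=
  agEntry G u w - agEntry (G.deleteEdges {s(a, b)}) u w

lemma agTerm_comm (x y : ℝ) : agTerm x y = agTerm y x := by
  unfold agTerm; rw [add_comm]

lemma agTerm_sq {a q : ℝ} (ha : 0 ≤ a) (hq : 0 ≤ q) :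
    agTerm (a ^ 2) (q ^ 2) = (a / q + q / a) / 2 := by
  unfold agTerm
  rw [← div_pow, ← div_pow, Real.sqrt_sq (by positivity), Real.sqrt_sq (by positivity)]

lemma agTerm_eq {x y : ℝ} (hx : 0 < x) (hy : 0 < y) :
    agTerm x y = (x + y) / √(x * y) / 2 := by
  have h := agTerm_sq (Real.sqrt_nonneg x) (Real.sqrt_nonneg y)
  rw [Real.sq_sqrt hx.le, Real.sq_sqrt hy.le] at h
  have h1 := Real.sqrt_pos.2 hx
  have h2 := Real.sqrt_pos.2 hy
  rw [h, Real.sqrt_mul hx.le]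
  field_simp
  rw [Real.sq_sqrt hx.le, Real.sq_sqrt hy.le]

lemma agTerm_pos {x y : ℝ} (hx : 0 < x) (hy : 0 < y) : 0 < agTerm x y := by
  unfold agTerm; positivity

lemma agTerm_sub_one_le {d k : ℝ} (hk : 0 < k) (hkd : k ≤ d - 1) :
    agTerm (d - 1) k ≤ agTerm d k := by
  obtain ⟨a, ha, rfl⟩ : ∃ a, 0 ≤ a ∧ d = a ^ 2 :=
    ⟨√d, Real.sqrt_nonneg _, (Real.sq_sqrt (by linarith)).symm⟩
  obtain ⟨b, hb, hab⟩ : ∃ b, 0 ≤ b ∧ a ^ 2 - 1 = b ^ 2 :=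
    ⟨√(a ^ 2 - 1), Real.sqrt_nonneg _, (Real.sq_sqrt (by linarith)).symm⟩
  obtain ⟨q, hq, rfl⟩ : ∃ q, 0 ≤ q ∧ k = q ^ 2 :=
    ⟨√k, Real.sqrt_nonneg _, (Real.sq_sqrt hk.le).symm⟩
  rw [hab] at hkd ⊢
  rw [agTerm_sq hb hq, agTerm_sq ha hq]
  have hq0 : 0 < q := by by_contra! h; nlinarith
  have hqb : q ≤ b := by nlinarith
  have hb0 : 0 < b := by linarith
  have hba : b < a := by nlinarith
  have ha0 : 0 < a := by linarith
  have key : (a / q + q / a) / 2 - (b / q + q / b) / 2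
      = (a - b) * (a * b - q ^ 2) / (2 * a * b * q) := by
    field_simp; ring
  have : 0 ≤ (a - b) * (a * b - q ^ 2) / (2 * a * b * q) := by
    apply div_nonneg _ (by positivity)
    apply mul_nonneg (by linarith)
    nlinarith
  linarith

lemma sub_one_mul_agTerm_sub_lt {d k D : ℝ} (hd : 1 < d) (hk : 0 < k) (hkD : k ≤ D) :
    (d - 1) * (agTerm (d - 1) k - agTerm d k) < (D - d + 1) / (2 * √D * √d) / 2 := by
  obtain ⟨a, ha, rfl⟩ : ∃ a, 0 ≤ a ∧ d = a ^ 2 :=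
    ⟨√d, Real.sqrt_nonneg _, (Real.sq_sqrt (by linarith)).symm⟩
  obtain ⟨b, hb, hab⟩ : ∃ b, 0 ≤ b ∧ a ^ 2 - 1 = b ^ 2 :=
    ⟨√(a ^ 2 - 1), Real.sqrt_nonneg _, (Real.sq_sqrt (by linarith)).symm⟩
  obtain ⟨q, hq, rfl⟩ : ∃ q, 0 ≤ q ∧ k = q ^ 2 :=
    ⟨√k, Real.sqrt_nonneg _, (Real.sq_sqrt hk.le).symm⟩
  obtain ⟨p, hp, rfl⟩ : ∃ p, 0 ≤ p ∧ D = p ^ 2 :=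
    ⟨√D, Real.sqrt_nonneg _, (Real.sq_sqrt (by linarith)).symm⟩
  rw [show p ^ 2 - a ^ 2 + 1 = p ^ 2 - b ^ 2 by linarith, hab, agTerm_sq hb hq, agTerm_sq ha hq,
    Real.sqrt_sq ha, Real.sqrt_sq hp]
  have hq0 : 0 < q := by by_contra! h; nlinarith
  have hqp : q ≤ p := by nlinarith
  have hp0 : 0 < p := by linarith
  have hb0 : 0 < b := by by_contra! h; nlinarith
  have hba : b < a := by nlinarith
  have ha0 : 0 < a := by linarith
  have mono : (b / q + q / b) / 2 - (a / q + q / a) / 2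
      ≤ (b / p + p / b) / 2 - (a / p + p / a) / 2 := by
    have : (b / p + p / b) / 2 - (a / p + p / a) / 2 - ((b / q + q / b) / 2 - (a / q + q / a) / 2)
        = (p - q) * (a - b) * (1 / (a * b) + 1 / (p * q)) / 2 := by
      field_simp; ring
    have : 0 ≤ (p - q) * (a - b) * (1 / (a * b) + 1 / (p * q)) / 2 :=
      div_nonneg (mul_nonneg (mul_nonneg (by linarith) (by linarith)) (by positivity)) (by norm_num)
    linarith
  refine (mul_le_mul_of_nonneg_left mono (by positivity)).trans_lt ?_
  have key : (p ^ 2 - b ^ 2) / (2 * p * a) / 2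
      - b ^ 2 * ((b / p + p / b) / 2 - (a / p + p / a) / 2)
      = (p ^ 2 - b ^ 2 - 2 * b * (a - b) * (p ^ 2 - a * b)) / (4 * p * a) := by
    field_simp; ring
  have num : (a + b) * (p ^ 2 - b ^ 2 - 2 * b * (a - b) * (p ^ 2 - a * b))
      = (p ^ 2 + b ^ 2) * (a - b) := by
    linear_combination (-2 * b * (p ^ 2 - a * b)) * hab
  have : 0 < (p ^ 2 - b ^ 2 - 2 * b * (a - b) * (p ^ 2 - a * b)) / (4 * p * a) := by
    apply div_pos _ (by positivity)
    refine (mul_pos_iff_of_pos_left (by positivity : 0 < a + b)).1 ?_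
    rw [num]
    exact mul_pos (by positivity) (by linarith)
  linarith

section Deletion

variable {V : Type*} [Fintype V] (G : SimpleGraph V)

lemma ndeg_eq_card_filter {v : V} [DecidablePred (G.Adj v)] :
    ndeg G v = (Finset.univ.filter (G.Adj v)).card := by
  unfold ndeg
  rw [← SimpleGraph.card_neighborFinset_eq_degree, SimpleGraph.neighborFinset_eq_filter]
  congr

lemma ndeg_pos {u w : V} (h : G.Adj u w) : 0 < ndeg G u := by
  classical
  rw [ndeg_eq_card_filter]
  exact Finset.card_pos.2 ⟨w, by simpa using h⟩

lemma ndeg_deleteEdges_of_ne {a b u : V} (ha : u ≠ a) (hb : u ≠ b) :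
    ndeg (G.deleteEdges {s(a, b)}) u = ndeg G u := by
  classical
  rw [ndeg_eq_card_filter, ndeg_eq_card_filter]
  congr 1
  ext w
  simp [SimpleGraph.deleteEdges_adj, ha, hb]

lemma card_filter_erase {a b : V} [DecidableEq V] [DecidablePred (G.Adj a)] (h : G.Adj a b) :
    ((Finset.univ.filter (G.Adj a)).erase b).card + 1 = ndeg G a := by
  rw [ndeg_eq_card_filter, Finset.card_erase_add_one]
  simpa using h

lemma ndeg_deleteEdges_add_one {a b : V} (h : G.Adj a b) :
    ndeg (G.deleteEdges {s(a, b)}) a + 1 = ndeg G a := by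
  classical
  rw [← card_filter_erase G h, ndeg_eq_card_filter]
  congr 2
  ext w
  have := h.ne
  simp only [SimpleGraph.deleteEdges_adj, Finset.mem_filter, Finset.mem_univ, true_and,
    Finset.mem_erase, Set.mem_singleton_iff, Sym2.eq_iff]
  tauto

lemma agEntry_comm (u w : V) : agEntry G u w = agEntry G w u := by
  by_cases h : G.Adj u w
  · simp [agEntry, h, h.symm, agTerm_comm (deg G u)]
  · simp [agEntry, h, G.adj_comm w u]

lemma agEntry_self (u : V) : agEntry G u u = 0 := by simp [agEntry]

lemma agDiff_comm (a b u w : V) : agDiff G a b u w = agDiff G a b w u := by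
  simp only [agDiff, agEntry_comm _ u w]

lemma agDiff_self (a b u : V) : agDiff G a b u u = 0 := by simp [agDiff, agEntry_self]

lemma agDiff_edge {a b : V} (h : G.Adj a b) :
    agDiff G a b a b = agTerm (deg G a) (deg G b) := by
  simp [agDiff, agEntry, h]

lemma agDiff_eq_zero {a b u w : V} (hua : u ≠ a) (hub : u ≠ b) (hwa : w ≠ a) (hwb : w ≠ b) :
    agDiff G a b u w = 0 := by
  by_cases h : G.Adj u w <;> simp [agDiff, agEntry, deg, ndeg_deleteEdges_of_ne, *]

lemma sum_agDiff_eq {a b : V} (h : G.Adj a b) [DecidableEq V] [DecidablePred (G.Adj a)] :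
    ∑ w, agDiff G a b a w = agTerm (deg G a) (deg G b) +
      ∑ w ∈ (Finset.univ.filter (G.Adj a)).erase b,
        (agTerm (deg G a) (deg G w) - agTerm (deg G a - 1) (deg G w)) := by
  rw [← Finset.add_sum_erase _ _ (Finset.mem_univ b), agDiff_edge G h, add_right_inj]
  rw [← Finset.filter_erase, Finset.sum_filter]
  have hd : deg (G.deleteEdges {s(a, b)}) a = deg G a - 1 := by
    have := ndeg_deleteEdges_add_one G h
    simp only [deg, ← this]; push_cast; ring
  refine Finset.sum_congr rfl fun w hw => ?_
  have hwb : w ≠ b := Finset.ne_of_mem_erase hw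
  by_cases haw : G.Adj a w
  · have hwa : w ≠ a := haw.ne'
    have hdw : deg (G.deleteEdges {s(a, b)}) w = deg G w := by
      simp [deg, ndeg_deleteEdges_of_ne G hwa hwb]
    simp [agDiff, agEntry, haw, hd, hdw, hwb, h.ne]
  · simp [agDiff, agEntry, haw]

lemma agTerm_le_sum_agDiff {a b : V} (h : G.Adj a b)
    (hlt : ∀ u, G.Adj a u → u ≠ b → ndeg G u < ndeg G a) :
    agTerm (deg G a) (deg G b) ≤ ∑ w, agDiff G a b a w := by
  classical
  rw [sum_agDiff_eq G h, le_add_iff_nonneg_right]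
  refine Finset.sum_nonneg fun w hw => sub_nonneg.2 ?_
  obtain ⟨hwb, haw⟩ : w ≠ b ∧ G.Adj a w := by simpa using hw
  have h1 : 0 < deg G w := Nat.cast_pos.2 (ndeg_pos G haw.symm)
  refine agTerm_sub_one_le h1 ?_
  have h2 : ((ndeg G w + 1 : ℕ) : ℝ) ≤ ndeg G a := Nat.cast_le.2 (hlt w haw hwb)
  push_cast at h2
  simp only [deg]; linarith

lemma agTerm_sub_lt_sum_agDiff {a b : V} (h : G.Adj a b) (ha : 2 ≤ ndeg G a) {D : ℕ}
    (hD : ∀ u, G.Adj a u → u ≠ b → ndeg G u ≤ D) :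
    agTerm (deg G a) (deg G b) - ((D : ℝ) - deg G a + 1) / (2 * √D * √(deg G a)) / 2 <
      ∑ w, agDiff G a b a w := by
  classical
  rw [sum_agDiff_eq G h]
  set s := (Finset.univ.filter (G.Adj a)).erase b with hs
  have hcard : (s.card : ℝ) + 1 = deg G a := by
    rw [deg, ← card_filter_erase G h]; push_cast; rfl
  have hd : (1 : ℝ) < deg G a := by
    rw [deg]; exact_mod_cast ha
  set T := ((D : ℝ) - deg G a + 1) / (2 * √D * √(deg G a)) / 2
  have hne : s.Nonempty := by
    rw [← Finset.card_pos]; exact_mod_cast (by linarith : (0 : ℝ) < s.card)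
  have hlt : ∑ w ∈ s, (-T / (deg G a - 1)) <
      ∑ w ∈ s, (agTerm (deg G a) (deg G w) - agTerm (deg G a - 1) (deg G w)) := by
    refine Finset.sum_lt_sum_of_nonempty hne fun w hw => ?_
    obtain ⟨hwb, haw⟩ : w ≠ b ∧ G.Adj a w := by simpa [hs] using hw
    have := sub_one_mul_agTerm_sub_lt hd (Nat.cast_pos.2 (ndeg_pos G haw.symm))
      (Nat.cast_le.2 (hD w haw hwb))
    rw [div_lt_iff₀ (by linarith)]
    simp only [deg, T] at this ⊢
    linarith
  rw [Finset.sum_const, nsmul_eq_mul, show (s.card : ℝ) = deg G a - 1 by linarith,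
    mul_div_cancel₀ _ (by linarith : deg G a - 1 ≠ 0)] at hlt
  linarith

lemma AG_sub_AG_deleteEdges {a b : V} (h : G.Adj a b) :
    AG G - AG (G.deleteEdges {s(a, b)}) =
      ∑ w, agDiff G a b a w + ∑ w, agDiff G a b b w - agTerm (deg G a) (deg G b) := by
  classical
  have hAG (H : SimpleGraph V) : AG H = 1 / 2 * ∑ u, ∑ w, agEntry H u w := rfl
  have hab := h.ne
  have split (u w : V) : agDiff G a b u w =
      (if u = a then agDiff G a b a w else 0) + (if u = b then agDiff G a b b w else 0) +
      (if w = a then agDiff G a b a u else 0) + (if w = b then agDiff G a b b u else 0) -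
      (if u = a then if w = b then agDiff G a b a b else 0 else 0) -
      (if u = b then if w = a then agDiff G a b a b else 0 else 0) := by
    have hs := agDiff_self G a b
    have hc := agDiff_comm G a b
    have hz := @agDiff_eq_zero V _ G a b u w
    grind
  have hsum : ∑ u, ∑ w, agDiff G a b u w = 2 * ∑ w, agDiff G a b a w +
      2 * ∑ w, agDiff G a b b w - 2 * agDiff G a b a b := by
    rw [Finset.sum_congr rfl fun u _ => Finset.sum_congr rfl fun w _ => split u w]
    simp only [Finset.sum_sub_distrib, Finset.sum_add_distrib, Finset.sum_ite_eq',
      Finset.mem_univ, if_true, Finset.sum_ite_irrel, Finset.sum_const_zero]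
    ring
  rw [← agDiff_edge G h, hAG, hAG, ← mul_sub, ← Finset.sum_sub_distrib]
  simp only [← Finset.sum_sub_distrib]
  change 1 / 2 * ∑ u, ∑ w, agDiff G a b u w = _
  rw [hsum]; ring

end Deletion

/-- Theorem 14 of the paper: sufficient conditions for `AG(G) > AG(G − e)` when `e = v_i v_j`
is an edge with non-pendent vertex `v_j` (the term `T_i` is stipulated to be `0` when `v_i`
is a pendent vertex). -/
theorem stmt19 {V : Type*} [Fintype V] (G : SimpleGraph V) (vi vj : V)
    (he : G.Adj vi vj) (hvj : 2 ≤ ndeg G vj)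
    (dmaxi dmaxj : ℕ)
    (hdmaxi : 2 ≤ ndeg G vi →
      IsGreatest {d : ℕ | ∃ u, G.Adj vi u ∧ u ≠ vj ∧ ndeg G u = d} dmaxi)
    (hdmaxj : IsGreatest {d : ℕ | ∃ u, G.Adj vj u ∧ u ≠ vi ∧ ndeg G u = d} dmaxj)
    (hcond :
      ((∀ u, G.Adj vi u → u ≠ vj → ndeg G u < ndeg G vi) ∧
        (∀ u, G.Adj vj u → u ≠ vi → ndeg G u < ndeg G vj)) ∨
      (if 2 ≤ ndeg G vi then
          ((dmaxi : ℝ) - (ndeg G vi : ℝ) + 1) /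
            (2 * Real.sqrt (dmaxi : ℝ) * Real.sqrt (ndeg G vi : ℝ))
        else 0) +
        ((dmaxj : ℝ) - (ndeg G vj : ℝ) + 1) /
          (2 * Real.sqrt (dmaxj : ℝ) * Real.sqrt (ndeg G vj : ℝ)) ≤
        ((ndeg G vi : ℝ) + (ndeg G vj : ℝ)) /
          Real.sqrt ((ndeg G vi : ℝ) * (ndeg G vj : ℝ))) :
    AG (G.deleteEdges {s(vi, vj)}) < AG G := by
  have hi : (0 : ℝ) < deg G vi := Nat.cast_pos.2 (ndeg_pos G he)
  have hj : (0 : ℝ) < deg G vj := Nat.cast_pos.2 (ndeg_pos G he.symm)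
  have hpos := agTerm_pos hi hj
  have hswap : ∑ w, agDiff G vi vj vj w = ∑ w, agDiff G vj vi vj w := by
    simp only [agDiff, Sym2.eq_swap]
  rw [← sub_pos, AG_sub_AG_deleteEdges G he, hswap]
  rcases hcond with ⟨hci, hcj⟩ | hcond
  · have h1 := agTerm_le_sum_agDiff G he hci
    have h2 := agTerm_le_sum_agDiff G he.symm hcj
    rw [agTerm_comm] at h2
    linarith
  · have h2 := agTerm_sub_lt_sum_agDiff G he.symm hvj
      fun u hu hne => hdmaxj.2 ⟨u, hu, hne, rfl⟩
    rw [agTerm_comm] at h2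
    have heq := agTerm_eq hi hj
    simp only [deg] at *
    split_ifs at hcond with hdi
    · have h1 := agTerm_sub_lt_sum_agDiff G he hdi
        fun u hu hne => (hdmaxi hdi).2 ⟨u, hu, hne, rfl⟩
      simp only [deg] at h1
      linarith
    · have h1 := agTerm_le_sum_agDiff G he fun u hu hne => by
        classical
        have hcard := card_filter_erase G he
        have hempty : (Finset.univ.filter (G.Adj vi)).erase vj = ∅ := by
          rw [← Finset.card_eq_zero]; omega
        exact absurd (show u ∈ (Finset.univ.filter (G.Adj vi)).erase vj by simp [hu, hne])
          (by simp [hempty])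
      simp only [deg] at h1
      linarith
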